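/- Assume {T_w : w ∈ S_n} is a basis of B_n, let w₀ be the longest element of S_n, and let λ : B_n → F be the F-linear functional determined by λ(T_w) = δ_{w,w₀}. Then λ(T_w T_i) = λ(T_{n−i} T_w) for all w ∈ S_n and all 1 ≤ i ≤ n−1; that is, the Nakayama automorphism of the Frobenius algebra B_n is the algebra automorphism determined by T_i ↦ T_{n−i}. -/

import Mathlib

open scoped TensorProduct

namespace HeckeLikeTower

variable (F : Type*) [Field F]

/-- The defining relations of the Hecke-like algebra of degree `n` over `F` with parameters
`c, d`.  The generators `T_1, …, T_{n-1}` are indexed by `Fin (n-1)`, where the index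
`i : Fin (n-1)` corresponds to the generator `T_{i+1}`. -/
inductive Rel (c d : F) (n : ℕ) :
    FreeAlgebra F (Fin (n - 1)) → FreeAlgebra F (Fin (n - 1)) → Prop
  | comm (i j : Fin (n - 1)) (h : (i : ℕ) + 1 < (j : ℕ)) :
      Rel c d n (FreeAlgebra.ι F i * FreeAlgebra.ι F j)
        (FreeAlgebra.ι F j * FreeAlgebra.ι F i)
  | braid (i j : Fin (n - 1)) (h : (j : ℕ) = (i : ℕ) + 1) :
      Rel c d n (FreeAlgebra.ι F i * FreeAlgebra.ι F j * FreeAlgebra.ι F i)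
        (FreeAlgebra.ι F j * FreeAlgebra.ι F i * FreeAlgebra.ι F j)
  | quad (i : Fin (n - 1)) :
      Rel c d n (FreeAlgebra.ι F i * FreeAlgebra.ι F i)
        (c • FreeAlgebra.ι F i + algebraMap F (FreeAlgebra F (Fin (n - 1))) d)

/-- The Hecke-like algebra `B_n` of degree `n` over `F` with parameters `c, d`: the quotient
of the free associative unital `F`-algebra on `T_1, …, T_{n-1}` by the two-sided ideal
generated by the relations. -/
abbrev B (c d : F) (n : ℕ) : Type _ := RingQuot (Rel F c d n)

/-- The generator `T_{i+1}` of the Hecke-like algebra `B_n` (for `i : Fin (n-1)`). -/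
def T (c d : F) (n : ℕ) (i : Fin (n - 1)) : B F c d n :=
  RingQuot.mkAlgHom F (Rel F c d n) (FreeAlgebra.ι F i)

/-- The adjacent transposition `s_{i+1} = (i+1, i+2) ∈ S_n` (for `i : Fin (n-1)`), acting on
`Fin n` by swapping `i` and `i+1` (`0`-based). -/
def s (n : ℕ) (i : Fin (n - 1)) : Equiv.Perm (Fin n) :=
  Equiv.swap ⟨(i : ℕ), lt_of_lt_of_le i.isLt (Nat.sub_le n 1)⟩
    ⟨(i : ℕ) + 1, by have := i.isLt; omega⟩

/-- The product in `S_n` of the adjacent transpositions along a word. -/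
def wordProd (n : ℕ) (l : List (Fin (n - 1))) : Equiv.Perm (Fin n) :=
  (l.map (s n)).prod

/-- The product `T_{i_1} ⋯ T_{i_r}` in `B_n` along a word `(i_1, …, i_r)`. -/
def Tword (c d : F) (n : ℕ) (l : List (Fin (n - 1))) : B F c d n :=
  (l.map (T F c d n)).prod

/-- `l` is a reduced word for the permutation `w ∈ S_n`: the corresponding product of
adjacent transpositions is `w`, and `l` has minimal length among all such words (its length
is then the Coxeter length `ℓ(w)`). -/
def IsReducedWord (n : ℕ) (w : Equiv.Perm (Fin n)) (l : List (Fin (n - 1))) : Prop :=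
  wordProd n l = w ∧
    ∀ l' : List (Fin (n - 1)), wordProd n l' = w → l.length ≤ l'.length

/-- The Coxeter length `ℓ(w)` of `w ∈ S_n` with respect to the adjacent transpositions. -/
noncomputable def len (n : ℕ) (w : Equiv.Perm (Fin n)) : ℕ :=
  sInf {r | ∃ l : List (Fin (n - 1)), wordProd n l = w ∧ l.length = r}

end HeckeLikeTower

open HeckeLikeTower

/-!
By Matsumoto's theorem the value of a reduced word in the generators depends only on the permutation
`w`, so `T_i T_w` is `T_{s_i w}` if left multiplication by `s_i` lengthens `w`, and
`c T_w + d T_{s_i w}` otherwise.  A functional `λ` that vanishes on `T_w` for `w ≠ w₀` therefore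
sees `T_i T_w` only if `w = w₀`, where the value is `c λ(T_{w₀})`, or if `s_i w = w₀`, where it is
`λ(T_{w₀})`.  Passing to the opposite algebra and to inverse permutations gives the same description
of `λ(T_w T_j)`, with `w s_j` in place of `s_i w`.  Since `w₀` is the order reversal, it conjugates
`s_j` to `s_{n-j}`, and the two descriptions agree.
-/

namespace HeckeLikeTower

open Finset MulOpposite

section AdjacentTranspositions

variable {n : ℕ}

/-- The smaller of the two points exchanged by the adjacent transposition `s n i`. -/
def lower (i : Fin (n - 1)) : Fin n := ⟨i, by lia⟩

/-- The larger of the two points exchanged by the adjacent transposition `s n i`. -/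
def upper (i : Fin (n - 1)) : Fin n := ⟨i + 1, by lia⟩

lemma s_eq_swap (i : Fin (n - 1)) : s n i = Equiv.swap (lower i) (upper i) := rfl

lemma lower_lt_upper (i : Fin (n - 1)) : lower i < upper i := Nat.lt_succ_self _

lemma lower_eq_upper {i j : Fin (n - 1)} (h : (j : ℕ) = i + 1) : lower j = upper i := Fin.ext h

lemma rev_lower (i : Fin (n - 1)) : (lower i).rev = upper i.rev := by
  ext; simp only [lower, upper, Fin.val_rev]; lia

lemma rev_upper (i : Fin (n - 1)) : (upper i).rev = lower i.rev := by
  ext; simp only [lower, upper, Fin.val_rev]; lia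

@[simp] lemma s_apply_lower (i : Fin (n - 1)) : s n i (lower i) = upper i :=
  Equiv.swap_apply_left _ _

@[simp] lemma s_apply_upper (i : Fin (n - 1)) : s n i (upper i) = lower i :=
  Equiv.swap_apply_right _ _

@[simp] lemma s_inv (i : Fin (n - 1)) : (s n i)⁻¹ = s n i := Equiv.swap_inv _ _

@[simp] lemma s_mul_self (i : Fin (n - 1)) : s n i * s n i = 1 := Equiv.swap_mul_self _ _

@[simp] lemma s_mul_cancel_left (i : Fin (n - 1)) (w : Equiv.Perm (Fin n)) :
    s n i * (s n i * w) = w := by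
  rw [← mul_assoc, s_mul_self, one_mul]

lemma s_apply_of_ne {i : Fin (n - 1)} {x : Fin n} (hlower : x ≠ lower i) (hupper : x ≠ upper i) :
    s n i x = x :=
  Equiv.swap_apply_of_ne_of_ne hlower hupper

lemma s_mul_eq_iff {i : Fin (n - 1)} {v w : Equiv.Perm (Fin n)} :
    s n i * v = w ↔ v = s n i * w := by
  rw [← inv_mul_eq_iff_eq_mul, s_inv]

lemma mul_s_eq_iff {i : Fin (n - 1)} {v w : Equiv.Perm (Fin n)} :
    v * s n i = w ↔ v = w * s n i := by
  rw [← eq_mul_inv_iff_mul_eq, s_inv]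

lemma s_apply_lt_iff {i : Fin (n - 1)} {x y : Fin n} (hxy : ¬(x = lower i ∧ y = upper i))
    (hyx : ¬(x = upper i ∧ y = lower i)) : s n i x < s n i y ↔ x < y := by
  simp only [s_eq_swap, Equiv.swap_apply_def, Fin.ext_iff, lower, upper] at hxy hyx ⊢
  split_ifs <;> simp only [Fin.lt_def] <;> lia

lemma s_mul_revPerm (i : Fin (n - 1)) : s n i.rev * Fin.revPerm = Fin.revPerm * s n i := by
  rw [s_eq_swap, s_eq_swap, Equiv.mul_swap_eq_swap_mul, Fin.revPerm_apply, Fin.revPerm_apply,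
    rev_lower, rev_upper, Equiv.swap_comm]

lemma strictMono_of_lower_lt_upper {α : Type*} [Preorder α] {f : Fin n → α}
    (hf : ∀ i : Fin (n - 1), f (lower i) < f (upper i)) : StrictMono f := by
  cases n with
  | zero => exact fun a => a.elim0
  | succ m => exact Fin.strictMono_iff_lt_succ.2 hf

end AdjacentTranspositions

section Length

variable {n : ℕ} {i : Fin (n - 1)} {w : Equiv.Perm (Fin n)} {l l' : List (Fin (n - 1))}

/-- `i` is a left descent of `w`: the value `i + 1` is attained before the value `i`; equivalently,
`s n i * w` is shorter than `w`. -/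
def IsLeftDescent (i : Fin (n - 1)) (w : Equiv.Perm (Fin n)) : Prop :=
  w⁻¹ (upper i) < w⁻¹ (lower i)

lemma not_isLeftDescent_iff : ¬IsLeftDescent i w ↔ w⁻¹ (lower i) < w⁻¹ (upper i) := by
  rw [IsLeftDescent, not_lt, le_iff_lt_or_eq, or_iff_left]
  exact fun h => (lower_lt_upper i).ne (w⁻¹.injective h)

lemma s_mul_inv_apply (i : Fin (n - 1)) (w : Equiv.Perm (Fin n)) (x : Fin n) :
    (s n i * w)⁻¹ x = w⁻¹ (s n i x) := by
  rw [mul_inv_rev, s_inv, Equiv.Perm.mul_apply]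

lemma isLeftDescent_s_mul_self : IsLeftDescent i (s n i * w) ↔ ¬IsLeftDescent i w := by
  rw [not_isLeftDescent_iff, IsLeftDescent, s_mul_inv_apply, s_mul_inv_apply, s_apply_lower,
    s_apply_upper]

lemma eq_one_of_forall_not_isLeftDescent (hw : ∀ i, ¬IsLeftDescent i w) : w = 1 := by
  have hmono : StrictMono ⇑w⁻¹ :=
    strictMono_of_lower_lt_upper fun i => not_isLeftDescent_iff.1 (hw i)
  exact inv_eq_one.1 (Equiv.coe_fn_injective hmono.eq_id)

lemma eq_revPerm_of_forall_isLeftDescent (hw : ∀ i, IsLeftDescent i w) : w = Fin.revPerm := by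
  have hanti : StrictAnti ⇑w⁻¹ :=
    (strictMono_of_lower_lt_upper (f := OrderDual.toDual ∘ ⇑w⁻¹) hw).dual_right
  have hid : ⇑w⁻¹ ∘ Fin.rev = id := (hanti.comp Fin.rev_strictAnti).eq_id
  refine Equiv.ext fun x => ?_
  rw [← Equiv.Perm.eq_inv_iff_eq]
  exact (congrFun hid x).symm

/-- The inversions of `w`, as pairs of positions; their number is the Coxeter length of `w`. -/
def inversions (w : Equiv.Perm (Fin n)) : Finset (Fin n × Fin n) :=
  {p | p.1 < p.2 ∧ w p.2 < w p.1}

lemma mem_inversions {a b : Fin n} : (a, b) ∈ inversions w ↔ a < b ∧ w b < w a := by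
  simp [inversions]

lemma inversions_one : inversions (1 : Equiv.Perm (Fin n)) = ∅ := by
  ext ⟨a, b⟩
  simpa [mem_inversions] using le_of_lt

lemma inversions_s_mul (h : ¬IsLeftDescent i w) :
    inversions (s n i * w) = insert (w⁻¹ (lower i), w⁻¹ (upper i)) (inversions w) := by
  rw [not_isLeftDescent_iff] at h
  ext ⟨a, b⟩
  obtain ⟨x, rfl⟩ := w⁻¹.surjective a
  obtain ⟨y, rfl⟩ := w⁻¹.surjective b
  have hcancel (z : Fin n) : w (w⁻¹ z) = z := w.apply_symm_apply z
  simp only [mem_insert, mem_inversions, Prod.mk.injEq, Equiv.Perm.mul_apply, hcancel,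
    EmbeddingLike.apply_eq_iff_eq]
  by_cases hxy : x = lower i ∧ y = upper i
  · obtain ⟨rfl, rfl⟩ := hxy
    simp only [s_apply_lower, s_apply_upper, h, lower_lt_upper, and_self, true_or]
  by_cases hyx : x = upper i ∧ y = lower i
  · obtain ⟨rfl, rfl⟩ := hyx
    simp only [h.not_gt, (lower_lt_upper i).ne', false_and, or_false]
  · simp only [hxy, false_or, s_apply_lt_iff (mt And.symm hyx) (mt And.symm hxy)]

lemma card_inversions_s_mul (h : ¬IsLeftDescent i w) :
    #(inversions (s n i * w)) = #(inversions w) + 1 := by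
  rw [inversions_s_mul h, card_insert_of_notMem]
  simp [mem_inversions, (lower_lt_upper i).le]

lemma card_inversions_s_mul_add_one (h : IsLeftDescent i w) :
    #(inversions (s n i * w)) + 1 = #(inversions w) := by
  rw [← card_inversions_s_mul (isLeftDescent_s_mul_self.not.2 (not_not.2 h)), s_mul_cancel_left]

lemma wordProd_cons (i : Fin (n - 1)) (l : List (Fin (n - 1))) :
    wordProd n (i :: l) = s n i * wordProd n l :=
  List.prod_cons

lemma wordProd_reverse (l : List (Fin (n - 1))) : wordProd n l.reverse = (wordProd n l)⁻¹ := by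
  simp [wordProd, List.prod_inv_reverse, Function.comp_def]

lemma card_inversions_wordProd_le (l : List (Fin (n - 1))) :
    #(inversions (wordProd n l)) ≤ l.length := by
  induction l with
  | nil => simp [wordProd, inversions_one]
  | cons i l ih =>
    rw [wordProd_cons, List.length_cons]
    by_cases h : IsLeftDescent i (wordProd n l)
    · have := card_inversions_s_mul_add_one h
      lia
    · rw [card_inversions_s_mul h]
      lia

lemma exists_wordProd_eq_and_length_eq_card (w : Equiv.Perm (Fin n)) :
    ∃ l, wordProd n l = w ∧ l.length = #(inversions w) := by
  induction hk : #(inversions w) using Nat.strong_induction_on generalizing w with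
  | _ k ih =>
    by_cases hw : ∃ i, IsLeftDescent i w
    · obtain ⟨i, hi⟩ := hw
      have hcard := card_inversions_s_mul_add_one hi
      obtain ⟨l, hl, hlength⟩ := ih _ (by lia) (s n i * w) rfl
      exact ⟨i :: l, by rw [wordProd_cons, hl, s_mul_cancel_left],
        by rw [List.length_cons, hlength, hcard, hk]⟩
    · obtain rfl := eq_one_of_forall_not_isLeftDescent (not_exists.1 hw)
      exact ⟨[], rfl, by rw [← hk, inversions_one]; rfl⟩

lemma len_eq_card_inversions (w : Equiv.Perm (Fin n)) : len n w = #(inversions w) := by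
  obtain ⟨l, hl, hlength⟩ := exists_wordProd_eq_and_length_eq_card w
  refine IsLeast.csInf_eq ⟨⟨l, hl, hlength⟩, ?_⟩
  rintro _ ⟨m, rfl, rfl⟩
  exact card_inversions_wordProd_le m

lemma len_s_mul (h : ¬IsLeftDescent i w) : len n (s n i * w) = len n w + 1 := by
  simpa only [len_eq_card_inversions] using card_inversions_s_mul h

lemma len_s_mul_add_one (h : IsLeftDescent i w) : len n (s n i * w) + 1 = len n w := by
  simpa only [len_eq_card_inversions] using card_inversions_s_mul_add_one h

lemma isReducedWord_iff : IsReducedWord n w l ↔ wordProd n l = w ∧ l.length = len n w := by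
  refine and_congr_right fun hl => ⟨fun hmin => le_antisymm ?_ (Nat.sInf_le ⟨l, hl, rfl⟩), ?_⟩
  · exact le_csInf ⟨_, l, hl, rfl⟩ (by rintro _ ⟨m, hm, rfl⟩; exact hmin m hm)
  · exact fun hlength m hm => hlength.le.trans (Nat.sInf_le ⟨m, hm, rfl⟩)

lemma exists_isReducedWord (w : Equiv.Perm (Fin n)) : ∃ l, IsReducedWord n w l := by
  simpa only [isReducedWord_iff, len_eq_card_inversions] using
    exists_wordProd_eq_and_length_eq_card w

lemma isReducedWord_cons_iff :
    IsReducedWord n w (i :: l) ↔ IsLeftDescent i w ∧ IsReducedWord n (s n i * w) l := by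
  simp only [isReducedWord_iff, wordProd_cons, s_mul_eq_iff, List.length_cons]
  by_cases h : IsLeftDescent i w
  · simp only [h, true_and, ← len_s_mul_add_one h, Nat.add_right_cancel_iff]
  · have hle (hl : wordProd n l = s n i * w) : len n w + 1 ≤ l.length := by
      rw [← len_s_mul h]
      exact Nat.sInf_le ⟨l, hl, rfl⟩
    simp only [h, false_and, iff_false, not_and]
    intro hl
    linarith [hle hl]

lemma IsReducedWord.length_eq (hl : IsReducedWord n w l) (hl' : IsReducedWord n w l') :
    l.length = l'.length :=
  (hl.2 l' hl'.1).antisymm (hl'.2 l hl.1)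

lemma IsReducedWord.reverse (hl : IsReducedWord n w l) : IsReducedWord n w⁻¹ l.reverse := by
  refine ⟨by rw [wordProd_reverse, hl.1], fun m hm => ?_⟩
  simpa using hl.2 m.reverse (by rw [wordProd_reverse, hm, inv_inv])

lemma len_inv (w : Equiv.Perm (Fin n)) : len n w⁻¹ = len n w := by
  obtain ⟨l, hl⟩ := exists_isReducedWord w
  rw [← (isReducedWord_iff.1 hl).2, ← (isReducedWord_iff.1 hl.reverse).2, List.length_reverse]

lemma isLeftDescent_of_forall_len_le {w₀ : Equiv.Perm (Fin n)} (hw₀ : ∀ w, len n w ≤ len n w₀)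
    (i : Fin (n - 1)) : IsLeftDescent i w₀ := by
  by_contra h
  have := hw₀ (s n i * w₀)
  have := len_s_mul h
  lia

end Length

section Matsumoto

variable {n : ℕ} {i j : Fin (n - 1)} {w : Equiv.Perm (Fin n)} {l l' : List (Fin (n - 1))}

/-- `t` satisfies the relations between the standard generators of the braid group on `n` strands,
with the indices ordered as in `Rel`. -/
structure IsBraidFamily {M : Type*} [Monoid M] (t : Fin (n - 1) → M) : Prop where
  comm (i j : Fin (n - 1)) (h : (i : ℕ) + 1 < j) : t i * t j = t j * t i
  braid (i j : Fin (n - 1)) (h : (j : ℕ) = i + 1) : t i * t j * t i = t j * t i * t j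

lemma isBraidFamily_s (n : ℕ) : IsBraidFamily (s n) where
  comm i j h := by
    refine (Equiv.Perm.disjoint_swap_swap ?_).commute
    simp only [List.nodup_cons, List.mem_cons, Fin.ext_iff, List.not_mem_nil, List.nodup_nil]
    lia
  braid i j h := by
    have hmid : lower j = upper i := lower_eq_upper h
    have hupper : upper j ≠ upper i := hmid ▸ (lower_lt_upper j).ne'
    have hne : lower i ≠ upper j := by simp only [lower, upper, ne_eq, Fin.ext_iff]; lia
    rw [s_eq_swap, s_eq_swap, hmid, Equiv.swap_mul_swap_mul_swap (lower_lt_upper i).ne hne,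
      Equiv.swap_comm (lower i), Equiv.swap_comm _ (upper j),
      Equiv.swap_mul_swap_mul_swap hupper hne.symm, Equiv.swap_comm]

variable {M : Type*} [Monoid M] {t : Fin (n - 1) → M}

lemma isLeftDescent_s_mul_of_add_one_lt (h : (i : ℕ) + 1 < j ∨ (j : ℕ) + 1 < i) :
    IsLeftDescent j (s n i * w) ↔ IsLeftDescent j w := by
  rw [IsLeftDescent, s_mul_inv_apply, s_mul_inv_apply, s_apply_of_ne, s_apply_of_ne, IsLeftDescent]
  all_goals simp only [lower, upper, ne_eq, Fin.ext_iff]; lia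

lemma IsBraidFamily.exists_isReducedWord_mul_eq_mul_of_add_one_lt (ht : IsBraidFamily t)
    (hi : IsLeftDescent i w) (hj : IsLeftDescent j w) (hij : (i : ℕ) + 1 < j) :
    ∃ l l', IsReducedWord n (s n i * w) l ∧ IsReducedWord n (s n j * w) l' ∧
      t i * (l.map t).prod = t j * (l'.map t).prod := by
  obtain ⟨m, hm⟩ := exists_isReducedWord (s n j * (s n i * w))
  have hm' : IsReducedWord n (s n i * (s n j * w)) m := by
    rwa [← mul_assoc, (isBraidFamily_s n).comm i j hij, mul_assoc]
  refine ⟨j :: m, i :: m, isReducedWord_cons_iff.2 ⟨?_, hm⟩, isReducedWord_cons_iff.2 ⟨?_, hm'⟩, ?_⟩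
  · exact (isLeftDescent_s_mul_of_add_one_lt (.inl hij)).2 hj
  · exact (isLeftDescent_s_mul_of_add_one_lt (.inr hij)).2 hi
  · simp only [List.map_cons, List.prod_cons, ← mul_assoc, ht.comm i j hij]

lemma IsBraidFamily.exists_isReducedWord_mul_eq_mul_of_eq_add_one (ht : IsBraidFamily t)
    (hi : IsLeftDescent i w) (hj : IsLeftDescent j w) (hij : (j : ℕ) = i + 1) :
    ∃ l l', IsReducedWord n (s n i * w) l ∧ IsReducedWord n (s n j * w) l' ∧
      t i * (l.map t).prod = t j * (l'.map t).prod := by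
  obtain ⟨m, hm⟩ := exists_isReducedWord (s n i * (s n j * (s n i * w)))
  have hm' : IsReducedWord n (s n j * (s n i * (s n j * w))) m := by
    rwa [← mul_assoc, ← mul_assoc, ← (isBraidFamily_s n).braid i j hij, mul_assoc, mul_assoc]
  have hmid : lower j = upper i := lower_eq_upper hij
  have hsi : s n i (upper j) = upper j := by
    apply s_apply_of_ne <;> simp only [lower, upper, ne_eq, Fin.ext_iff] <;> lia
  have hsj : s n j (lower i) = lower i := by
    apply s_apply_of_ne <;> simp only [lower, upper, ne_eq, Fin.ext_iff] <;> lia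
  have hsj' : s n j (upper i) = upper j := by rw [← hmid, s_apply_lower]
  rw [IsLeftDescent] at hi
  rw [IsLeftDescent, hmid] at hj
  refine ⟨j :: i :: m, i :: j :: m, ?_, ?_, ?_⟩
  · simpa only [isReducedWord_cons_iff, hm, IsLeftDescent, s_mul_inv_apply, hmid, hsi, hsj, hsj',
      s_apply_lower, s_apply_upper, and_true] using ⟨hj.trans hi, hj⟩
  · simpa only [isReducedWord_cons_iff, hm', IsLeftDescent, s_mul_inv_apply, hmid, hsi, hsj, hsj',
      s_apply_lower, s_apply_upper, and_true] using ⟨hj.trans hi, hi⟩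
  · simp only [List.map_cons, List.prod_cons, ← mul_assoc, ht.braid i j hij]

lemma IsBraidFamily.exists_isReducedWord_mul_eq_mul_of_lt (ht : IsBraidFamily t)
    (hi : IsLeftDescent i w) (hj : IsLeftDescent j w) (hij : i < j) :
    ∃ l l', IsReducedWord n (s n i * w) l ∧ IsReducedWord n (s n j * w) l' ∧
      t i * (l.map t).prod = t j * (l'.map t).prod := by
  rcases (Nat.succ_le_of_lt hij).lt_or_eq with hlt | heq
  · exact ht.exists_isReducedWord_mul_eq_mul_of_add_one_lt hi hj hlt
  · exact ht.exists_isReducedWord_mul_eq_mul_of_eq_add_one hi hj heq.symm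

lemma IsBraidFamily.exists_isReducedWord_mul_eq_mul (ht : IsBraidFamily t)
    (hi : IsLeftDescent i w) (hj : IsLeftDescent j w) (hij : i ≠ j) :
    ∃ l l', IsReducedWord n (s n i * w) l ∧ IsReducedWord n (s n j * w) l' ∧
      t i * (l.map t).prod = t j * (l'.map t).prod := by
  rcases hij.lt_or_gt with hlt | hgt
  · exact ht.exists_isReducedWord_mul_eq_mul_of_lt hi hj hlt
  · obtain ⟨l', l, hl', hl, heq⟩ := ht.exists_isReducedWord_mul_eq_mul_of_lt hj hi hgt
    exact ⟨l, l', hl, hl', heq.symm⟩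

theorem IsBraidFamily.prod_map_eq (ht : IsBraidFamily t) (hl : IsReducedWord n w l)
    (hl' : IsReducedWord n w l') : (l.map t).prod = (l'.map t).prod := by
  induction hk : l.length generalizing w l l' with
  | zero =>
    rw [List.length_eq_zero_iff.1 hk, List.length_eq_zero_iff.1 ((hl'.length_eq hl).trans hk)]
  | succ k ih =>
    obtain ⟨i, m, rfl⟩ := List.exists_cons_of_length_eq_add_one hk
    obtain ⟨j, m', rfl⟩ := List.exists_cons_of_length_eq_add_one ((hl'.length_eq hl).trans hk)
    obtain ⟨hi, hm⟩ := isReducedWord_cons_iff.1 hl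
    obtain ⟨hj, hm'⟩ := isReducedWord_cons_iff.1 hl'
    have hmk : m.length = k := Nat.succ_injective hk
    simp only [List.map_cons, List.prod_cons]
    obtain rfl | hij := eq_or_ne i j
    · rw [ih hm hm' hmk]
    · obtain ⟨v, v', hv, hv', hmul⟩ := ht.exists_isReducedWord_mul_eq_mul hi hj hij
      have hmk' : m'.length = k := Nat.succ_injective ((hl'.length_eq hl).trans hk)
      rw [ih hm hv hmk, hmul, ih hm' hv' hmk']

end Matsumoto

section Hecke

variable {R A M : Type*} [CommSemiring R] [Semiring A] [Algebra R A] [AddCommMonoid M] [Module R M]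
  {c d : R} {n : ℕ} {t : Fin (n - 1) → A} {i : Fin (n - 1)} {w w₀ : Equiv.Perm (Fin n)}
  {l l' : List (Fin (n - 1))} {word : Equiv.Perm (Fin n) → List (Fin (n - 1))} {lam : A →ₗ[R] M}

/-- `t` satisfies the defining relations of the Hecke-like algebra of degree `n` with parameters
`c, d`, in an arbitrary `R`-algebra. -/
structure IsHeckeFamily (c d : R) (t : Fin (n - 1) → A) : Prop extends IsBraidFamily t where
  quad (i : Fin (n - 1)) : t i * t i = c • t i + algebraMap R A d

lemma isHeckeFamily_T {F : Type*} [Field F] (c d : F) (n : ℕ) : IsHeckeFamily c d (T F c d n) where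
  comm i j h := by simpa only [T, map_mul] using RingQuot.mkAlgHom_rel F (Rel.comm i j h)
  braid i j h := by simpa only [T, map_mul] using RingQuot.mkAlgHom_rel F (Rel.braid i j h)
  quad i := by
    simpa only [T, map_mul, map_add, map_smul, AlgHom.commutes] using
      RingQuot.mkAlgHom_rel F (Rel.quad (c := c) (d := d) i)

lemma IsHeckeFamily.mulOpposite (ht : IsHeckeFamily c d t) :
    IsHeckeFamily c d fun i => op (t i) where
  comm i j h := by rw [← op_mul, ← op_mul, ht.comm i j h]
  braid i j h := by simp only [← op_mul, ← mul_assoc, ht.braid i j h]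
  quad i := by rw [← op_mul, ht.quad, op_add, op_smul, MulOpposite.algebraMap_apply]

lemma IsHeckeFamily.mul_prod_of_not_isLeftDescent (ht : IsHeckeFamily c d t)
    (hl : IsReducedWord n w l) (hl' : IsReducedWord n (s n i * w) l') (h : ¬IsLeftDescent i w) :
    t i * (l.map t).prod = (l'.map t).prod := by
  have hil : IsReducedWord n (s n i * w) (i :: l) :=
    isReducedWord_cons_iff.2 ⟨isLeftDescent_s_mul_self.2 h, by rwa [s_mul_cancel_left]⟩
  rw [← ht.prod_map_eq hil hl', List.map_cons, List.prod_cons]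

lemma IsHeckeFamily.mul_prod_of_isLeftDescent (ht : IsHeckeFamily c d t)
    (hl : IsReducedWord n w l) (hl' : IsReducedWord n (s n i * w) l') (h : IsLeftDescent i w) :
    t i * (l.map t).prod = c • (l.map t).prod + d • (l'.map t).prod := by
  have hil' : (l.map t).prod = t i * (l'.map t).prod := by
    rw [ht.prod_map_eq hl (isReducedWord_cons_iff.2 ⟨h, hl'⟩), List.map_cons, List.prod_cons]
  rw [hil', ← mul_assoc, ht.quad, add_mul, smul_mul_assoc, Algebra.smul_def d]

lemma IsHeckeFamily.map_mul_prod (ht : IsHeckeFamily c d t)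
    (hword : ∀ w, IsReducedWord n w (word w)) (hw₀ : ∀ w, len n w ≤ len n w₀)
    (hlam : ∀ w ≠ w₀, lam ((word w).map t).prod = 0) (w : Equiv.Perm (Fin n)) (i : Fin (n - 1)) :
    lam (t i * ((word w).map t).prod) =
      (if w = w₀ then c • lam ((word w₀).map t).prod else 0) +
        if s n i * w = w₀ then lam ((word w₀).map t).prod else 0 := by
  have hw₀i : IsLeftDescent i w₀ := isLeftDescent_of_forall_len_le hw₀ i
  by_cases h : IsLeftDescent i w
  · have hne : s n i * w ≠ w₀ := by
      rintro rfl
      exact isLeftDescent_s_mul_self.1 hw₀i h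
    rw [ht.mul_prod_of_isLeftDescent (hword w) (hword _) h, map_add, map_smul, map_smul,
      hlam _ hne, if_neg hne, smul_zero]
    split_ifs with hw
    · rw [hw]
    · rw [hlam w hw, smul_zero]
  · have hne : w ≠ w₀ := by
      rintro rfl
      exact h hw₀i
    rw [ht.mul_prod_of_not_isLeftDescent (hword w) (hword _) h, if_neg hne, zero_add]
    split_ifs with hw
    · rw [hw]
    · exact hlam _ hw

lemma IsHeckeFamily.map_prod_mul (ht : IsHeckeFamily c d t)
    (hword : ∀ w, IsReducedWord n w (word w)) (hw₀ : ∀ w, len n w ≤ len n w₀)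
    (hlam : ∀ w ≠ w₀, lam ((word w).map t).prod = 0) (w : Equiv.Perm (Fin n)) (i : Fin (n - 1)) :
    lam (((word w).map t).prod * t i) =
      (if w = w₀ then c • lam ((word w₀).map t).prod else 0) +
        if w * s n i = w₀ then lam ((word w₀).map t).prod else 0 := by
  have hprod (l : List (Fin (n - 1))) :
      (l.reverse.map fun i => op (t i)).prod = op (l.map t).prod := by
    rw [op_list_prod, List.map_map, List.map_reverse]; rfl
  have hmul_inv : s n i * w⁻¹ = (w * s n i)⁻¹ := by rw [mul_inv_rev, s_inv]
  have hleft := ht.mulOpposite.map_mul_prod (word := fun w => (word w⁻¹).reverse) (w₀ := w₀⁻¹)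
    (lam := lam ∘ₗ (opLinearEquiv R).symm.toLinearMap)
    (fun w => by simpa only [inv_inv] using (hword w⁻¹).reverse)
    (fun w => by simpa only [len_inv] using hw₀ w)
    (fun w hw => (congrArg _ (hprod _)).trans (hlam w⁻¹ (mt inv_eq_iff_eq_inv.1 hw))) w⁻¹ i
  simpa only [hprod, inv_inv, hmul_inv, inv_inj, ← op_mul, LinearMap.comp_apply,
    LinearEquiv.coe_coe, coe_opLinearEquiv_symm, unop_op] using hleft

end Hecke

end HeckeLikeTower

theorem heckeLike_nakayama_general {R A M : Type*} [CommSemiring R] [Semiring A] [Algebra R A]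
    [AddCommMonoid M] [Module R M] {c d : R} {n : ℕ} {t : Fin (n - 1) → A}
    (ht : IsHeckeFamily c d t) {word : Equiv.Perm (Fin n) → List (Fin (n - 1))}
    (hword : ∀ w, IsReducedWord n w (word w)) {w₀ : Equiv.Perm (Fin n)}
    (hw₀ : ∀ w, len n w ≤ len n w₀) {lam : A →ₗ[R] M}
    (hlam : ∀ w ≠ w₀, lam ((word w).map t).prod = 0) (w : Equiv.Perm (Fin n)) (j : Fin (n - 1)) :
    lam (((word w).map t).prod * t j) = lam (t j.rev * ((word w).map t).prod) := by
  have hw₀_eq : w₀ = Fin.revPerm :=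
    eq_revPerm_of_forall_isLeftDescent (isLeftDescent_of_forall_len_le hw₀)
  have hiff : w * s n j = w₀ ↔ s n j.rev * w = w₀ := by
    rw [mul_s_eq_iff, s_mul_eq_iff, hw₀_eq, s_mul_revPerm]
  simp only [ht.map_prod_mul hword hw₀ hlam, ht.map_mul_prod hword hw₀ hlam, hiff]

/-- assume `{T_w : w ∈ S_n}` is a basis of `B_n`, let `w₀` be the longest
element of `S_n` and `λ : B_n → F` the linear functional with `λ(T_w) = δ_{w,w₀}`.  Then
`λ(T_w T_i) = λ(T_{n−i} T_w)` for all `w ∈ S_n` and `1 ≤ i ≤ n−1`; i.e. the Nakayama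
automorphism of `B_n` is determined by `T_i ↦ T_{n−i}`.  (Here the generator `T_i` is
`T F c d n j` with `i = j + 1`, so `T_{n-i}` has index `n - 2 - j`.) -/
theorem heckeLike_nakayama (F : Type*) [Field F] (c d : F) (n : ℕ) (hn : 0 < n)
    (word : Equiv.Perm (Fin n) → List (Fin (n - 1)))
    (hword : ∀ w, IsReducedWord n w (word w))
    (hindep : LinearIndependent F (fun w : Equiv.Perm (Fin n) => Tword F c d n (word w)))
    (hspan : Submodule.span F
      (Set.range (fun w : Equiv.Perm (Fin n) => Tword F c d n (word w))) = ⊤)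
    (w₀ : Equiv.Perm (Fin n)) (hw₀ : ∀ w, len n w ≤ len n w₀)
    (lam : B F c d n →ₗ[F] F)
    (hlam : ∀ w : Equiv.Perm (Fin n),
      lam (Tword F c d n (word w)) = if w = w₀ then 1 else 0) :
    ∀ (w : Equiv.Perm (Fin n)) (j : Fin (n - 1)),
      lam (Tword F c d n (word w) * T F c d n j) =
      lam (T F c d n ⟨n - 2 - (j : ℕ), by have := j.isLt; omega⟩ * Tword F c d n (word w)) := by
  intro w j
  have hrev : (⟨n - 2 - (j : ℕ), by have := j.isLt; omega⟩ : Fin (n - 1)) = j.rev :=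
    Fin.ext (by simp only [Fin.val_rev]; lia)
  rw [hrev]
  exact heckeLike_nakayama_general (isHeckeFamily_T c d n) hword hw₀
    (fun w hw => (hlam w).trans (if_neg hw)) w j
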